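/- Let p ≥ 4 be an even integer, ξ(q) = q^p/p, so ξ'(q) = q^{p−1}, and θ(q) = qξ'(q) − ξ(q) = ((p−1)/p) q^p. Let x > 0 be the unique positive solution of 1/p = ((1+x)/x²) log(1+x) − 1/x, and set δ = x/(1+x) and γ = ((p−1)/p) x²/(1+x). Suppose β > 0, m ∈ (0,1] and q ∈ (0,1) satisfy the critical point equations β² ξ'(q) = m^{-1}(1/(1−q) − 1/(1−q+mq)) and β² ξ(q) = m^{-2} log((1−q+qm)/(1−q)) − (q/m)·1/(1−q+qm). Then qm = x(1−q), m β² ξ'(q)(1−q) = δ, and m² β² θ(q) = γ. -/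

import Mathlib

/-!
In terms of `y = qm / (1 - q)` one has `1 - q + qm = (1 - q)(1 + y)`, and the critical point
equations become `m β² ξ'(q) (1 - q) = y / (1 + y)` and `m² β² ξ(q) = log (1 + y) - y / (1 + y)`.
The first one also reads `m² β² q ξ'(q) = y² / (1 + y)`. Since `q ξ'(q) = p ξ(q)`, dividing
shows that `y` satisfies the equation defining `x`. The right-hand side of that equation is
strictly decreasing on `(0, ∞)`, because `2y / (y + 2) < log (1 + y)`, so `y = x`.
-/

theorem hasDerivAt_one_add_div_sq_mul_log_sub_one_div {x : ℝ} (hx : x ≠ 0) (hx' : 1 + x ≠ 0) :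
    HasDerivAt (fun y : ℝ => (1 + y) / y ^ 2 * Real.log (1 + y) - 1 / y)
      ((2 * x - (x + 2) * Real.log (1 + x)) / x ^ 3) x := by
  have hadd : HasDerivAt (fun y : ℝ => 1 + y) 1 x := (hasDerivAt_id x).const_add 1
  have hdiv := hadd.fun_div (hasDerivAt_pow 2 x) (pow_ne_zero 2 hx)
  have hinv : HasDerivAt (fun y : ℝ => 1 / y) (-(x ^ 2)⁻¹) x := by
    simpa only [one_div] using hasDerivAt_inv hx
  refine ((hdiv.fun_mul (hadd.log hx')).fun_sub hinv).congr_deriv ?_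
  field_simp
  push_cast
  ring

theorem strictAntiOn_one_add_div_sq_mul_log_sub_one_div :
    StrictAntiOn (fun y : ℝ => (1 + y) / y ^ 2 * Real.log (1 + y) - 1 / y) (Set.Ioi 0) := by
  have hderiv (y : ℝ) (hy : 0 < y) :=
    hasDerivAt_one_add_div_sq_mul_log_sub_one_div hy.ne' (by positivity : 1 + y ≠ 0)
  refine strictAntiOn_of_deriv_neg (convex_Ioi 0)
    (fun y hy => (hderiv y hy).continuousAt.continuousWithinAt) fun y hy => ?_
  rw [interior_Ioi] at hy
  have hy : 0 < y := hy
  have hlog : 2 * y < Real.log (1 + y) * (y + 2) :=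
    (div_lt_iff₀ (by positivity)).mp (Real.lt_log_one_add_of_pos hy)
  rw [(hderiv y hy).deriv]
  exact div_neg_of_neg_of_pos (by linarith) (by positivity)

section CriticalPoint

-- `a` and `b` stand for `β² ξ'(q)` and `β² ξ(q)`, for an arbitrary `ξ`.
variable {m q y a b : ℝ}

theorem one_sub_add_mul_eq_of_mul_eq (hqm : q * m = y * (1 - q)) :
    1 - q + q * m = (1 - q) * (1 + y) := by
  linear_combination hqm

theorem mul_mul_one_sub_eq_of_critical (hm : m ≠ 0) (hq : 1 - q ≠ 0) (hy : 1 + y ≠ 0)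
    (hqm : q * m = y * (1 - q))
    (ha : a = m⁻¹ * (1 / (1 - q) - 1 / (1 - q + m * q))) :
    m * a * (1 - q) = y / (1 + y) := by
  rw [ha, mul_comm m q, one_sub_add_mul_eq_of_mul_eq hqm]
  field_simp
  ring

theorem sq_mul_eq_of_critical (hm : m ≠ 0) (hq : 1 - q ≠ 0) (hy : 1 + y ≠ 0)
    (hqm : q * m = y * (1 - q))
    (hb : b = 1 / m ^ 2 * Real.log ((1 - q + q * m) / (1 - q)) -
      q / m * (1 / (1 - q + q * m))) :
    m ^ 2 * b = Real.log (1 + y) - y / (1 + y) := by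
  rw [one_sub_add_mul_eq_of_mul_eq hqm, mul_div_cancel_left₀ _ hq] at hb
  calc m ^ 2 * b = Real.log (1 + y) - q * m / ((1 - q) * (1 + y)) := by
        rw [hb]; field_simp
    _ = Real.log (1 + y) - y / (1 + y) := by
        rw [hqm, mul_comm y, mul_div_mul_left _ _ hq]

theorem sq_mul_mul_eq_of_mul_mul_one_sub_eq (hqm : q * m = y * (1 - q))
    (ha : m * a * (1 - q) = y / (1 + y)) : m ^ 2 * (q * a) = y ^ 2 / (1 + y) := by
  calc m ^ 2 * (q * a) = y * (m * a * (1 - q)) := by linear_combination m * a * hqm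
    _ = y ^ 2 / (1 + y) := by rw [ha]; ring

theorem one_div_eq_of_critical {p : ℝ} (hp : p ≠ 0) (hy : y ≠ 0) (hy' : 1 + y ≠ 0)
    (hab : q * a = p * b) (ha : m ^ 2 * (q * a) = y ^ 2 / (1 + y))
    (hb : m ^ 2 * b = Real.log (1 + y) - y / (1 + y)) :
    1 / p = (1 + y) / y ^ 2 * Real.log (1 + y) - 1 / y := by
  have h : y ^ 2 / (1 + y) = p * (Real.log (1 + y) - y / (1 + y)) := by
    rw [← ha, ← hb, hab]; ring
  field_simp at h ⊢
  linear_combination h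

end CriticalPoint

theorem stmt9_general {p x δ γ β m q : ℝ} (hp : p ≠ 0) (hx : 0 < x)
    (hxeq : 1 / p = (1 + x) / x ^ 2 * Real.log (1 + x) - 1 / x)
    (hδ : δ = x / (1 + x)) (hγ : γ = (p - 1) / p * x ^ 2 / (1 + x))
    (hm : 0 < m) (hq : q ∈ Set.Ioo (0 : ℝ) 1)
    (hc1 : β ^ 2 * q ^ (p - 1) = m⁻¹ * (1 / (1 - q) - 1 / (1 - q + m * q)))
    (hc2 : β ^ 2 * (q ^ p / p)
      = (1 / m ^ 2) * Real.log ((1 - q + q * m) / (1 - q)) - (q / m) * (1 / (1 - q + q * m))) :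
    q * m = x * (1 - q) ∧
    m * β ^ 2 * q ^ (p - 1) * (1 - q) = δ ∧
    m ^ 2 * β ^ 2 * ((p - 1) / p * q ^ p) = γ := by
  obtain ⟨hq0, hq1⟩ := hq
  have hr : 0 < 1 - q := sub_pos.mpr hq1
  obtain ⟨y, hqm⟩ : ∃ y, q * m = y * (1 - q) := ⟨_, (div_mul_cancel₀ _ hr.ne').symm⟩
  have hy : 0 < y := pos_of_mul_pos_left (hqm ▸ mul_pos hq0 hm) hr.le
  have hy' : 1 + y ≠ 0 := by positivity
  have hpow : q * q ^ (p - 1) = q ^ p := by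
    rw [Real.rpow_sub_one hq0.ne', mul_div_cancel₀ _ hq0.ne']
  have hξ' := mul_mul_one_sub_eq_of_critical hm.ne' hr.ne' hy' hqm hc1
  have hqξ' := sq_mul_mul_eq_of_mul_mul_one_sub_eq hqm hξ'
  have hξ := sq_mul_eq_of_critical hm.ne' hr.ne' hy' hqm hc2
  have hhom : q * (β ^ 2 * q ^ (p - 1)) = p * (β ^ 2 * (q ^ p / p)) := by
    rw [mul_left_comm, hpow, mul_left_comm, mul_div_cancel₀ _ hp]
  have hyeq := one_div_eq_of_critical hp hy.ne' hy' hhom hqξ' hξ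
  obtain rfl : y = x :=
    strictAntiOn_one_add_div_sq_mul_log_sub_one_div.injOn hy hx (hyeq.symm.trans hxeq)
  refine ⟨hqm, by rw [mul_assoc m, hξ', hδ], ?_⟩
  calc m ^ 2 * β ^ 2 * ((p - 1) / p * q ^ p)
      = (p - 1) / p * (m ^ 2 * (q * (β ^ 2 * q ^ (p - 1)))) := by rw [← hpow]; ring
    _ = γ := by rw [hqξ', hγ, mul_div_assoc]

theorem stmt9 (p : ℕ) (hp : 4 ≤ p) (hpe : Even p) (x δ γ β m q : ℝ)
    (hx : 0 < x)
    (hxeq : 1 / (p : ℝ) = (1 + x) / x ^ 2 * Real.log (1 + x) - 1 / x)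
    (hδ : δ = x / (1 + x))
    (hγ : γ = ((p : ℝ) - 1) / p * x ^ 2 / (1 + x))
    (hβ : 0 < β) (hm : m ∈ Set.Ioc (0 : ℝ) 1) (hq : q ∈ Set.Ioo (0 : ℝ) 1)
    (hc1 : β ^ 2 * q ^ (p - 1) = m⁻¹ * (1 / (1 - q) - 1 / (1 - q + m * q)))
    (hc2 : β ^ 2 * (q ^ p / p)
      = (1 / m ^ 2) * Real.log ((1 - q + q * m) / (1 - q)) - (q / m) * (1 / (1 - q + q * m))) :
    q * m = x * (1 - q) ∧
    m * β ^ 2 * q ^ (p - 1) * (1 - q) = δ ∧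
    m ^ 2 * β ^ 2 * (((p : ℝ) - 1) / p * q ^ p) = γ := by
  rw [← Real.rpow_natCast q (p - 1), Nat.cast_pred (by lia)] at hc1 ⊢
  rw [← Real.rpow_natCast q p] at hc2 ⊢
  exact stmt9_general (Nat.cast_ne_zero.mpr (by lia)) hx hxeq hδ hγ hm.1 hq hc1 hc2
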